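/- Riemann mapping theorem: every nonempty, simply connected, open proper subset of the complex plane is biholomorphic to the open unit disk. -/

import Mathlib

open Metric

/-!
Fix `z₀ ∈ U` and maximize `‖deriv f z₀‖` over the injective holomorphic maps `f` of `U` into the
unit disc. Such maps exist because `√(z - a)`, for `a ∉ U`, has a branch on `U` whose image omits a
disc. By Montel's theorem a maximizing sequence has a limit, and by Hurwitz's theorem the limit,
being nonconstant, is again injective. The maximizer `f` is onto: if it omitted a value, one could
move that value to `0` by a disc automorphism and take a square root. Squaring strictly contracts
the hyperbolic metric of the disc while automorphisms preserve it, so the square root, once its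
value at `z₀` is moved to `0`, would have a larger derivative at `z₀` than `f`.
-/

open Filter Function Set Topology
open scoped ComplexConjugate

section HolomorphicSqrt

theorem hasDerivAt_of_comp_eventuallyEq {𝕜 : Type*} [NontriviallyNormedField 𝕜] [CompleteSpace 𝕜]
    {φ h g : 𝕜 → 𝕜} {z φ' g' : 𝕜} (hφ : HasStrictDerivAt φ φ' (h z)) (hφ' : φ' ≠ 0)
    (hh : ContinuousAt h z) (hg : HasDerivAt g g' z) (hφh : φ ∘ h =ᶠ[𝓝 z] g) :
    HasDerivAt h (φ'⁻¹ * g') z := by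
  have hψ : HasDerivAt (hφ.localInverse φ φ' (h z) hφ') φ'⁻¹ (g z) :=
    hφh.eq_of_nhds ▸ (hφ.to_localInverse hφ').hasDerivAt
  refine (hψ.comp z hg).congr_of_eventuallyEq ?_
  filter_upwards [hh.eventually (hφ.eventually_left_inverse hφ'), hφh] with w hw hgw
  exact (hw.symm.trans (congrArg _ hgw) :)

/-- Every zero-free holomorphic function on `U` has a holomorphic square root on `U`. -/
def HasHolomorphicSqrt (U : Set ℂ) : Prop :=
  ∀ g : ℂ → ℂ, DifferentiableOn ℂ g U → (∀ z ∈ U, g z ≠ 0) →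
    ∃ h : ℂ → ℂ, DifferentiableOn ℂ h U ∧ ∀ z ∈ U, h z ^ 2 = g z

theorem hasHolomorphicSqrt_of_isSimplyConnected {U : Set ℂ} (hsc : IsSimplyConnected U)
    (hU : IsOpen U) : HasHolomorphicSqrt U := by
  intro g hg hg0
  obtain ⟨h, hh, hsq⟩ := Complex.exists_continuousOn_pow_eq hsc hU hg.continuousOn
    (by simpa using hg0) two_ne_zero
  refine ⟨h, fun z hz ↦ ?_, fun z _ ↦ hsq z⟩
  have hhz : h z ≠ 0 := fun h0 ↦ hg0 z hz (by simp [← hsq z, h0])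
  have hsquare : HasStrictDerivAt (fun w : ℂ ↦ w ^ 2) (2 * h z) (h z) := by
    simpa using hasStrictDerivAt_pow 2 (h z)
  exact (hasDerivAt_of_comp_eventuallyEq hsquare (by simpa using hhz)
    (hh.continuousAt (hU.mem_nhds hz)) (hg.differentiableAt (hU.mem_nhds hz)).hasDerivAt
    (.of_forall hsq)).differentiableAt.differentiableWithinAt

end HolomorphicSqrt

section Hurwitz

/-- The minimum modulus principle: otherwise the maximum principle applies to `1 / f`. -/
theorem exists_mem_closure_eq_zero_of_forall_mem_frontier_le_norm {E : Type*}
    [NormedAddCommGroup E] [NormedSpace ℂ E] [Nontrivial E] {f : E → ℂ} {V : Set E} {c : E} {m : ℝ}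
    (hV : Bornology.IsBounded V) (hf : DiffContOnCl ℂ f V) (hc : c ∈ closure V) (hfc : ‖f c‖ < m)
    (hm : ∀ z ∈ frontier V, m ≤ ‖f z‖) : ∃ z ∈ closure V, f z = 0 := by
  by_contra! hf0
  have hm0 : 0 < m := (norm_nonneg _).trans_lt hfc
  have hinv : ‖(f c)⁻¹‖ ≤ m⁻¹ :=
    Complex.norm_le_of_forall_mem_frontier_norm_le hV (hf.inv hf0)
      (fun z hz ↦ by simpa using inv_anti₀ hm0 (hm z hz)) hc
  rw [norm_inv, inv_le_inv₀ (norm_pos_iff.2 (hf0 c hc)) hm0] at hinv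
  exact hfc.not_ge hinv

variable {ι : Type*} {l : Filter ι} [l.NeBot] {F : ι → ℂ → ℂ} {g : ℂ → ℂ} {U : Set ℂ}

theorem eventually_eq_zero_of_tendstoLocallyUniformlyOn (hU : IsOpen U)
    (hF : ∀ᶠ n in l, DifferentiableOn ℂ (F n) U) (hF0 : ∀ᶠ n in l, ∀ z ∈ U, F n z ≠ 0)
    (hlim : TendstoLocallyUniformlyOn F g l U) {b : ℂ} (hb : b ∈ U) (hgb : g b = 0) :
    ∀ᶠ z in 𝓝 b, g z = 0 := by
  have hg : DifferentiableOn ℂ g U := hlim.differentiableOn hF hU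
  refine (hg.analyticAt (hU.mem_nhds hb)).eventually_eq_zero_or_eventually_ne_zero.resolve_right
    fun hisolated ↦ ?_
  obtain ⟨r, hr, hball⟩ := nhds_basis_closedBall.eventually_iff.1
    ((eventually_nhdsWithin_iff.1 hisolated).and (hU.eventually_mem hb))
  have hsub : closedBall b r ⊆ U := fun z hz ↦ (hball hz).2
  have hsphere : sphere b r ⊆ U := sphere_subset_closedBall.trans hsub
  obtain ⟨x, hx, hmin⟩ := (isCompact_sphere b r).exists_isMinOn
    (NormedSpace.sphere_nonempty.2 hr.le) (hg.continuousOn.mono hsphere).norm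
  have hgx : 0 < ‖g x‖ :=
    norm_pos_iff.2 ((hball (sphere_subset_closedBall hx)).1 (ne_of_mem_sphere hx hr.ne'))
  have hunif : ∀ᶠ n in l, ∀ z ∈ sphere b r, dist (g z) (F n z) < ‖g x‖ / 2 :=
    tendstoUniformlyOn_iff.1 ((tendstoLocallyUniformlyOn_iff_forall_isCompact hU).1 hlim _ hsphere
      (isCompact_sphere b r)) _ (half_pos hgx)
  have hcenter : ∀ᶠ n in l, ‖F n b‖ < ‖g x‖ / 2 :=
    (hlim.tendsto_at hb).norm.eventually_lt_const (by simpa [hgb] using hgx)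
  obtain ⟨n, hFn, hFn0, hnunif, hncenter⟩ := (hF.and (hF0.and (hunif.and hcenter))).exists
  have hbound : ∀ z ∈ frontier (ball b r), ‖g x‖ / 2 ≤ ‖F n z‖ := by
    intro z hz
    rw [frontier_ball b hr.ne'] at hz
    have hclose := hnunif z hz
    rw [dist_eq_norm] at hclose
    linarith [norm_sub_norm_le (g z) (F n z), isMinOn_iff.1 hmin z hz]
  obtain ⟨z, hz, hFz⟩ := exists_mem_closure_eq_zero_of_forall_mem_frontier_le_norm isBounded_ball
    (hFn.mono (closure_ball_subset_closedBall.trans hsub)).diffContOnCl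
    (subset_closure (mem_ball_self hr)) hncenter hbound
  exact hFn0 z (hsub (closure_ball_subset_closedBall hz)) hFz

end Hurwitz

section Montel

theorem tendstoLocallyUniformlyOn_of_equicontinuousOn {ι X α : Type*} [TopologicalSpace X]
    [UniformSpace α] {l : Filter ι} [l.NeBot] {F : ι → X → α} {g : X → α} {U : Set X}
    (hF : EquicontinuousOn F U) (hlim : ∀ x ∈ U, Tendsto (F · x) l (𝓝 (g x))) :
    TendstoLocallyUniformlyOn F g l U := by
  intro u hu x hx
  obtain ⟨v, hv, hsymm, hvu⟩ := comp_comp_symm_mem_uniformity_sets hu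
  obtain ⟨w, ⟨hw, hwclosed⟩, hwv⟩ := uniformity_hasBasis_closed.mem_iff.1 hv
  refine ⟨{y | y ∈ U ∧ ∀ n, (F n x, F n y) ∈ w}, inter_mem self_mem_nhdsWithin (hF x hx w hw), ?_⟩
  filter_upwards [Uniform.tendsto_nhds_right.1 (hlim x hx) hv] with n hn y hy
  have hxy : (g x, g y) ∈ w :=
    hwclosed.mem_of_tendsto ((hlim x hx).prodMk_nhds (hlim y hy.1)) (.of_forall hy.2)
  exact hvu ⟨F n x, ⟨g x, hsymm.symm _ _ (hwv hxy), hn⟩, hwv (hy.2 n)⟩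

theorem mapsTo_closedBall_apply_of_mapsTo_closedBall {α β : Type*} [PseudoMetricSpace β]
    {f : α → β} {s : Set α} {c : β} {R : ℝ} (hf : MapsTo f s (closedBall c R)) {x : α}
    (hx : x ∈ s) : MapsTo f s (closedBall (f x) (2 * R)) := fun y hy ↦
  calc dist (f y) (f x) ≤ dist (f y) c + dist (f x) c := dist_triangle_right _ _ _
    _ ≤ R + R := add_le_add (hf hy) (hf hx)
    _ = 2 * R := (two_mul R).symm

variable {ι E G : Type*} [NormedAddCommGroup E] [NormedSpace ℂ E] [NormedAddCommGroup G]
  [NormedSpace ℂ G] {F : ι → E → G} {U : Set E} {c : G} {R : ℝ}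

theorem equicontinuousAt_of_differentiableOn_of_mapsTo_closedBall {x : E} (hU : U ∈ 𝓝 x)
    (hF : ∀ n, DifferentiableOn ℂ (F n) U) (hmaps : ∀ n, MapsTo (F n) U (closedBall c R)) :
    EquicontinuousAt F x := by
  obtain ⟨r, hr, hrU⟩ := nhds_basis_ball.mem_iff.1 hU
  refine equicontinuousAt_of_continuity_modulus (fun y ↦ 2 * R / r * dist y x) ?_ F ?_
  · exact Continuous.tendsto' (by fun_prop) _ _ (by simp)
  · filter_upwards [ball_mem_nhds x hr] with y hy n
    rw [dist_comm]
    exact Complex.dist_le_div_mul_dist_of_mapsTo_ball ((hF n).mono hrU)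
      (mapsTo_closedBall_apply_of_mapsTo_closedBall ((hmaps n).mono_left hrU)
        (mem_ball_self hr)) hy

/-- Montel's theorem. An ultrafilter replaces the diagonal subsequence: pointwise limits along it
exist by compactness, and equicontinuity makes them locally uniform. -/
theorem exists_tendstoLocallyUniformlyOn_of_mapsTo_closedBall [ProperSpace G] (l : Ultrafilter ι)
    (hU : IsOpen U) (hF : ∀ n, DifferentiableOn ℂ (F n) U)
    (hmaps : ∀ n, MapsTo (F n) U (closedBall c R)) :
    ∃ g, TendstoLocallyUniformlyOn F g l U := by
  have hlim : ∀ z ∈ U, ∃ w ∈ closedBall c R, Tendsto (F · z) l (𝓝 w) := fun z hz ↦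
    (isCompact_closedBall c R).ultrafilter_le_nhds (l.map (F · z))
      (tendsto_principal.2 (.of_forall fun n ↦ hmaps n hz))
  choose! g _ hg using hlim
  refine ⟨g, tendstoLocallyUniformlyOn_of_equicontinuousOn (fun z hz ↦ ?_) hg⟩
  exact (equicontinuousAt_of_differentiableOn_of_mapsTo_closedBall (hU.mem_nhds hz) hF
    hmaps).equicontinuousWithinAt U

end Montel

section Univalent

theorem tendstoLocallyUniformlyOn_slope {E : Type*} [NormedAddCommGroup E] [NormedSpace ℂ E]
    [CompleteSpace E] {f : ℂ → E} {U : Set ℂ} (hU : IsOpen U) (hf : DifferentiableOn ℂ f U) :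
    TendstoLocallyUniformlyOn (fun t z ↦ t⁻¹ • (f (z + t) - f z)) (deriv f) (𝓝[≠] 0) U := by
  rw [hU.tendstoLocallyUniformlyOn_iff_forall_tendsto]
  intro x hx
  have hfst : Tendsto Prod.fst (𝓝[≠] (0 : ℂ) ×ˢ 𝓝 x) (𝓝 0) :=
    tendsto_fst.mono_right nhdsWithin_le_nhds
  have hpair : Tendsto (fun p : ℂ × ℂ ↦ (p.2 + p.1, p.2)) (𝓝[≠] 0 ×ˢ 𝓝 x) (𝓝 (x, x)) := by
    simpa using (tendsto_snd.add hfst).prodMk_nhds tendsto_snd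
  have hslope : Tendsto (fun p : ℂ × ℂ ↦ p.1⁻¹ • (f (p.2 + p.1) - f p.2)) (𝓝[≠] 0 ×ˢ 𝓝 x)
      (𝓝 (deriv f x)) := by
    have hstrict := (hf.analyticAt (hU.mem_nhds hx)).hasStrictDerivAt.isLittleO.comp_tendsto hpair
    rw [← tendsto_sub_nhds_zero_iff]
    refine hstrict.tendsto_inv_smul_nhds_zero.congr' ?_
    filter_upwards [tendsto_fst.eventually self_mem_nhdsWithin] with p hp
    simp [smul_sub, smul_smul, inv_mul_cancel₀ (show p.1 ≠ 0 from hp)]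
  have hderiv : Tendsto (fun p : ℂ × ℂ ↦ deriv f p.2) (𝓝[≠] 0 ×ˢ 𝓝 x) (𝓝 (deriv f x)) :=
    ((hf.deriv hU).continuousOn.continuousAt (hU.mem_nhds hx)).tendsto.comp tendsto_snd
  exact (hderiv.prodMk_nhds hslope).mono_right (nhds_le_uniformity _)

/-- Univalent functions on `U`: the injective holomorphic ones. -/
structure IsUnivalentOn (f : ℂ → ℂ) (U : Set ℂ) : Prop where
  differentiableOn : DifferentiableOn ℂ f U
  injOn : InjOn f U

namespace IsUnivalentOn

variable {f g : ℂ → ℂ} {U V : Set ℂ}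

theorem comp (hg : IsUnivalentOn g V) (hf : IsUnivalentOn f U) (hmaps : MapsTo f U V) :
    IsUnivalentOn (g ∘ f) U :=
  ⟨hg.differentiableOn.comp hf.differentiableOn hmaps, hg.injOn.comp hf.injOn hmaps⟩

theorem not_eqOn_const (hf : IsUnivalentOn f U) (hU : IsOpen U) (hne : U.Nonempty) (c : ℂ) :
    ¬EqOn f (fun _ ↦ c) U := by
  intro hc
  obtain ⟨z, hz⟩ := hne
  have hsub : U ⊆ {z} := fun w hw ↦ hf.injOn hw hz ((hc hw).trans (hc hz).symm)
  exact not_isOpen_singleton z ((hsub.antisymm (singleton_subset_iff.2 hz)) ▸ hU)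

/-- The difference quotients of an injective function have no zeros, so by Hurwitz's theorem their
limit `deriv f` vanishes nowhere unless it vanishes on a neighbourhood. -/
theorem deriv_ne_zero (hf : IsUnivalentOn f U) (hU : IsOpen U) {z : ℂ} (hz : z ∈ U) :
    deriv f z ≠ 0 := by
  intro hfz
  obtain ⟨r, hr, hrU⟩ := nhds_basis_ball.mem_iff.1 (hU.mem_nhds hz)
  have hadd : ∀ t ∈ ball (0 : ℂ) (r / 2), ∀ w ∈ ball z (r / 2), w + t ∈ U := by
    intro t ht w hw
    rw [mem_ball_zero_iff] at ht
    rw [mem_ball_iff_norm] at hw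
    refine hrU (mem_ball_iff_norm.2 ?_)
    calc ‖w + t - z‖ = ‖(w - z) + t‖ := by ring_nf
      _ ≤ ‖w - z‖ + ‖t‖ := norm_add_le _ _
      _ < r := by linarith
  have hball : ball z (r / 2) ⊆ U := (ball_subset_ball (half_le_self hr.le)).trans hrU
  have hsmall : ∀ᶠ t in 𝓝[≠] (0 : ℂ), t ∈ ball (0 : ℂ) (r / 2) :=
    nhdsWithin_le_nhds (ball_mem_nhds 0 (half_pos hr))
  have hzero : deriv f =ᶠ[𝓝 z] 0 := by
    refine eventually_eq_zero_of_tendstoLocallyUniformlyOn isOpen_ball ?_ ?_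
      ((tendstoLocallyUniformlyOn_slope hU hf.differentiableOn).mono hball)
      (mem_ball_self (half_pos hr)) hfz
    · filter_upwards [hsmall] with t ht
      exact ((hf.differentiableOn.comp (by fun_prop) (hadd t ht)).sub
        (hf.differentiableOn.mono hball)).const_smul t⁻¹
    · filter_upwards [hsmall, self_mem_nhdsWithin] with t ht ht0 w hw
      refine smul_ne_zero (inv_ne_zero ht0) (sub_ne_zero.2 fun heq ↦ ht0 ?_)
      simpa using hf.injOn (hadd t ht w hw) (hball hw) heq
  obtain ⟨ε, hε, hεU⟩ := nhds_basis_ball.mem_iff.1 (inter_mem (hU.mem_nhds hz) hzero)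
  have hf' : IsUnivalentOn f (ball z ε) :=
    ⟨hf.differentiableOn.mono fun w hw ↦ (hεU hw).1, hf.injOn.mono fun w hw ↦ (hεU hw).1⟩
  refine hf'.not_eqOn_const isOpen_ball (nonempty_ball.2 hε) (f z) fun w hw ↦ ?_
  exact isOpen_ball.is_const_of_deriv_eq_zero (convex_ball z ε).isPreconnected hf'.differentiableOn
    (fun x hx ↦ (hεU hx).2) hw (mem_ball_self hε)

theorem hasStrictDerivAt (hf : IsUnivalentOn f U) (hU : IsOpen U) {z : ℂ} (hz : z ∈ U) :
    HasStrictDerivAt f (deriv f z) z :=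
  (hf.differentiableOn.analyticAt (hU.mem_nhds hz)).hasStrictDerivAt

theorem isOpen_image (hf : IsUnivalentOn f U) (hU : IsOpen U) : IsOpen (f '' U) := by
  rw [isOpen_iff_mem_nhds]
  rintro _ ⟨z, hz, rfl⟩
  rw [← (hf.hasStrictDerivAt hU hz).map_nhds_eq (hf.deriv_ne_zero hU hz)]
  exact image_mem_map (hU.mem_nhds hz)

theorem differentiableOn_invFunOn (hf : IsUnivalentOn f U) (hU : IsOpen U) :
    DifferentiableOn ℂ (invFunOn f U) (f '' U) := by
  rintro _ ⟨z, hz, rfl⟩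
  have hleft : ∀ᶠ w in 𝓝 z, invFunOn f U (f w) = w := by
    filter_upwards [hU.mem_nhds hz] with w hw using hf.injOn.leftInvOn_invFunOn hw
  exact ((hf.hasStrictDerivAt hU hz).to_local_left_inverse (hf.deriv_ne_zero hU hz)
    hleft).hasDerivAt.differentiableAt.differentiableWithinAt

theorem of_tendstoLocallyUniformlyOn {ι : Type*} {l : Filter ι} [l.NeBot] {F : ι → ℂ → ℂ}
    (hU : IsOpen U) (hconn : IsPreconnected U) (hF : ∀ᶠ n in l, IsUnivalentOn (F n) U)
    (hlim : TendstoLocallyUniformlyOn F g l U) (hg : ∀ c, ¬EqOn g (fun _ ↦ c) U) :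
    IsUnivalentOn g U := by
  have hgd : DifferentiableOn ℂ g U :=
    hlim.differentiableOn (hF.mono fun _ ↦ (·.differentiableOn)) hU
  refine ⟨hgd, fun x hx y hy hxy ↦ ?_⟩
  by_contra hne
  have hsub : TendstoLocallyUniformlyOn (fun n z ↦ F n z - F n x) (fun z ↦ g z - g x) l (U \ {x}) :=
    (hlim.mono sdiff_subset).fun_sub
      ((hlim.tendsto_at hx).tendstoUniformlyOn_const _).tendstoLocallyUniformlyOn
  have hzero : ∀ᶠ z in 𝓝 y, g z - g x = 0 := by
    refine eventually_eq_zero_of_tendstoLocallyUniformlyOn (hU.sdiff isClosed_singleton) ?_ ?_ hsub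
      ⟨hy, Ne.symm hne⟩ (sub_eq_zero.2 hxy.symm)
    · filter_upwards [hF] with n hn using (hn.differentiableOn.mono sdiff_subset).sub_const _
    · filter_upwards [hF] with n hn z hz
      exact sub_ne_zero.2 fun heq ↦ hz.2 (hn.injOn hz.1 hx heq)
  exact hg (g x) ((hgd.analyticOnNhd hU).eqOn_of_preconnected_of_eventuallyEq analyticOnNhd_const
    hconn hy (hzero.mono fun z ↦ sub_eq_zero.1))

end IsUnivalentOn

end Univalent

section Disc

/-- The disc automorphism that moves `a` to `0`. -/
noncomputable def blaschkeFactor (a w : ℂ) : ℂ :=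
  (w - a) / (1 - conj a * w)

/-- The norm of the derivative of `f` at `z`, measured in the Euclidean metric at `z` and in the
hyperbolic metric `|dw| / (1 - |w|²)` of the unit disc at `f z`. It is meaningful only for
`‖f z‖ < 1`. -/
noncomputable def hyperbolicDeriv (f : ℂ → ℂ) (z : ℂ) : ℝ :=
  ‖deriv f z‖ / (1 - ‖f z‖ ^ 2)

variable {a w z : ℂ} {f h : ℂ → ℂ}

theorem one_sub_conj_mul_ne_zero (ha : ‖a‖ < 1) (hw : ‖w‖ < 1) : 1 - conj a * w ≠ 0 := by
  refine sub_ne_zero.2 fun heq ↦ ?_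
  have hlt : ‖conj a * w‖ < 1 := by
    simpa using mul_lt_one_of_nonneg_of_lt_one_left (norm_nonneg a) ha hw.le
  simp [← heq] at hlt

theorem one_sub_norm_sq_pos (hw : ‖w‖ < 1) : 0 < 1 - ‖w‖ ^ 2 :=
  sub_pos.2 (pow_lt_one₀ (norm_nonneg w) hw two_ne_zero)

theorem norm_one_sub_conj_mul_sq_sub_norm_sub_sq (a w : ℂ) :
    ‖1 - conj a * w‖ ^ 2 - ‖w - a‖ ^ 2 = (1 - ‖a‖ ^ 2) * (1 - ‖w‖ ^ 2) := by
  simp only [Complex.sq_norm, Complex.normSq_apply, Complex.sub_re, Complex.sub_im, Complex.mul_re,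
    Complex.mul_im, Complex.conj_re, Complex.conj_im, Complex.one_re, Complex.one_im]
  ring

theorem one_sub_norm_blaschkeFactor_sq (haw : 1 - conj a * w ≠ 0) :
    1 - ‖blaschkeFactor a w‖ ^ 2 = (1 - ‖a‖ ^ 2) * (1 - ‖w‖ ^ 2) / ‖1 - conj a * w‖ ^ 2 := by
  have hnorm : ‖1 - conj a * w‖ ^ 2 ≠ 0 := pow_ne_zero 2 (norm_ne_zero_iff.2 haw)
  rw [← norm_one_sub_conj_mul_sq_sub_norm_sub_sq, blaschkeFactor, norm_div, div_pow, sub_div,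
    div_self hnorm]

theorem norm_blaschkeFactor_lt_one (ha : ‖a‖ < 1) (hw : ‖w‖ < 1) : ‖blaschkeFactor a w‖ < 1 := by
  have haw := one_sub_conj_mul_ne_zero ha hw
  have hpos : 0 < 1 - ‖blaschkeFactor a w‖ ^ 2 := by
    rw [one_sub_norm_blaschkeFactor_sq haw]
    exact div_pos (mul_pos (one_sub_norm_sq_pos ha) (one_sub_norm_sq_pos hw))
      (pow_pos (norm_pos_iff.2 haw) 2)
  exact lt_of_pow_lt_pow_left₀ 2 zero_le_one (by linarith)

theorem blaschkeFactor_eq_zero_iff (haw : 1 - conj a * w ≠ 0) :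
    blaschkeFactor a w = 0 ↔ w = a := by
  rw [blaschkeFactor, div_eq_zero_iff, or_iff_left haw, sub_eq_zero]

theorem hasDerivAt_blaschkeFactor (haw : 1 - conj a * w ≠ 0) :
    HasDerivAt (blaschkeFactor a) ((1 - ‖a‖ ^ 2) / (1 - conj a * w) ^ 2) w := by
  have hden : HasDerivAt (fun w ↦ 1 - conj a * w) (-conj a) w := by
    simpa using ((hasDerivAt_id w).const_mul (conj a)).const_sub 1
  refine (((hasDerivAt_id w).sub_const a).div hden haw).congr_deriv ?_
  rw [← Complex.conj_mul', id]
  ring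

theorem isUnivalentOn_blaschkeFactor (ha : ‖a‖ < 1) :
    IsUnivalentOn (blaschkeFactor a) (ball 0 1) := by
  have hden : ∀ w ∈ ball (0 : ℂ) 1, 1 - conj a * w ≠ 0 := fun w hw ↦
    one_sub_conj_mul_ne_zero ha (mem_ball_zero_iff.1 hw)
  refine ⟨fun w hw ↦
    (hasDerivAt_blaschkeFactor (hden w hw)).differentiableAt.differentiableWithinAt,
    fun w hw v hv hwv ↦ ?_⟩
  have ha0 : (1 : ℂ) - conj a * a ≠ 0 := one_sub_conj_mul_ne_zero ha ha
  rw [blaschkeFactor, blaschkeFactor, div_eq_div_iff (hden w hw) (hden v hv)] at hwv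
  refine mul_right_cancel₀ ha0 ?_
  linear_combination hwv

theorem norm_deriv_le_hyperbolicDeriv (hfz : ‖f z‖ < 1) : ‖deriv f z‖ ≤ hyperbolicDeriv f z :=
  le_div_self (norm_nonneg _) (one_sub_norm_sq_pos hfz) (sub_le_self 1 (sq_nonneg _))

theorem hyperbolicDeriv_eq_norm_deriv (hfz : f z = 0) : hyperbolicDeriv f z = ‖deriv f z‖ := by
  simp [hyperbolicDeriv, hfz]

theorem hyperbolicDeriv_congr_of_eventuallyEq (hfh : f =ᶠ[𝓝 z] h) :
    hyperbolicDeriv f z = hyperbolicDeriv h z := by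
  rw [hyperbolicDeriv, hyperbolicDeriv, hfh.deriv_eq, hfh.eq_of_nhds]

theorem hyperbolicDeriv_blaschkeFactor_comp (ha : ‖a‖ < 1) (hf : DifferentiableAt ℂ f z)
    (hfz : ‖f z‖ < 1) : hyperbolicDeriv (blaschkeFactor a ∘ f) z = hyperbolicDeriv f z := by
  have haf := one_sub_conj_mul_ne_zero ha hfz
  have ha' : 0 < 1 - ‖a‖ ^ 2 := one_sub_norm_sq_pos ha
  have hnorm : ‖(1 - ‖a‖ ^ 2 : ℂ)‖ = 1 - ‖a‖ ^ 2 := by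
    exact_mod_cast Complex.norm_of_nonneg ha'.le
  have hfz' : 1 - ‖f z‖ ^ 2 ≠ 0 := (one_sub_norm_sq_pos hfz).ne'
  have haf' : ‖1 - conj a * f z‖ ≠ 0 := norm_ne_zero_iff.2 haf
  rw [hyperbolicDeriv, hyperbolicDeriv,
    ((hasDerivAt_blaschkeFactor haf).comp z hf.hasDerivAt).deriv, comp_apply,
    one_sub_norm_blaschkeFactor_sq haf, norm_mul, norm_div, norm_pow, hnorm]
  field_simp

theorem hyperbolicDeriv_sq_lt (hhz : ‖h z‖ < 1) (hh : deriv h z ≠ 0) :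
    hyperbolicDeriv (fun w ↦ h w ^ 2) z < hyperbolicDeriv h z := by
  have hderiv : ‖deriv (fun w ↦ h w ^ 2) z‖ = 2 * ‖h z‖ * ‖deriv h z‖ := by
    simp [deriv_fun_pow (differentiableAt_of_deriv_ne_zero hh)]
  have hsq : 1 - ‖h z ^ 2‖ ^ 2 = (1 - ‖h z‖ ^ 2) * (1 + ‖h z‖ ^ 2) := by
    rw [norm_pow]
    ring
  have hlt : 2 * ‖h z‖ / (1 + ‖h z‖ ^ 2) < 1 := by
    rw [div_lt_one (by positivity)]
    nlinarith [pow_pos (sub_pos.2 hhz) 2]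
  have hpos : 0 < hyperbolicDeriv h z := div_pos (norm_pos_iff.2 hh) (one_sub_norm_sq_pos hhz)
  calc hyperbolicDeriv (fun w ↦ h w ^ 2) z
      = 2 * ‖h z‖ / (1 + ‖h z‖ ^ 2) * hyperbolicDeriv h z := by
        rw [hyperbolicDeriv, hderiv, hsq, hyperbolicDeriv, div_mul_div_comm,
          mul_comm (1 - ‖h z‖ ^ 2)]
    _ < hyperbolicDeriv h z := mul_lt_of_lt_one_left hpos hlt

end Disc

section Extremal

/-- The univalent maps of `U` into the unit disc: the competitors of the extremal problem. -/
def discEmbeddings (U : Set ℂ) : Set (ℂ → ℂ) :=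
  {f | IsUnivalentOn f U ∧ MapsTo f U (ball 0 1)}

variable {U : Set ℂ} {f g : ℂ → ℂ}

theorem HasHolomorphicSqrt.exists_isUnivalentOn_sq_eq (hsqrt : HasHolomorphicSqrt U)
    (hg : IsUnivalentOn g U) (hg0 : ∀ z ∈ U, g z ≠ 0) :
    ∃ h, IsUnivalentOn h U ∧ ∀ z ∈ U, h z ^ 2 = g z := by
  obtain ⟨h, hh, hsq⟩ := hsqrt g hg.differentiableOn hg0
  refine ⟨h, ⟨hh, fun z hz w hw heq ↦ hg.injOn hz hw ?_⟩, hsq⟩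
  rw [← hsq z hz, ← hsq w hw, heq]

theorem div_sub_mem_discEmbeddings (hf : IsUnivalentOn f U) {c : ℂ} {ε : ℝ} (hε : 0 < ε)
    (hdisj : Disjoint (f '' U) (closedBall c ε)) :
    (fun z ↦ ε / (f z - c)) ∈ discEmbeddings U := by
  have hfar : ∀ z ∈ U, ε < ‖f z - c‖ := fun z hz ↦ by
    simpa [dist_eq_norm] using disjoint_left.1 hdisj (mem_image_of_mem f hz)
  have hne : ∀ z ∈ U, f z - c ≠ 0 := fun z hz ↦ norm_pos_iff.1 (hε.trans (hfar z hz))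
  refine ⟨⟨(differentiableOn_const _).fun_div (hf.differentiableOn.sub_const c) hne,
    fun z hz w hw hzw ↦ hf.injOn hz hw ?_⟩, fun z hz ↦ ?_⟩
  · simpa [div_eq_mul_inv, hε.ne'] using hzw
  · rw [mem_ball_zero_iff, norm_div, Complex.norm_of_nonneg hε.le,
      div_lt_one (hε.trans (hfar z hz))]
    exact hfar z hz

/-- A branch of `√(z - a)` with `a ∉ U` never takes both a value and its negative, so its open image
is disjoint from a disc. -/
theorem discEmbeddings_nonempty (hU : IsOpen U) (hne : U.Nonempty) (hproper : U ≠ univ)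
    (hsqrt : HasHolomorphicSqrt U) : (discEmbeddings U).Nonempty := by
  obtain ⟨a, ha⟩ := (ne_univ_iff_exists_notMem U).1 hproper
  obtain ⟨x, hx⟩ := hne
  have htrans : IsUnivalentOn (fun z ↦ z - a) U :=
    ⟨by fun_prop, sub_left_injective.injOn⟩
  have htrans0 : ∀ z ∈ U, z - a ≠ 0 := fun z hz ↦
    sub_ne_zero.2 (ne_of_mem_of_not_mem hz ha)
  obtain ⟨h, hh, hsq⟩ := hsqrt.exists_isUnivalentOn_sq_eq htrans htrans0
  have hneg : ∀ z ∈ U, ∀ w ∈ U, h z ≠ -h w := by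
    intro z hz w hw heq
    obtain rfl : z = w := htrans.injOn hz hw (by simp only [← hsq z hz, ← hsq w hw, heq, neg_sq])
    exact htrans0 z hz (by rw [← hsq z hz, self_eq_neg.1 heq, sq, mul_zero])
  obtain ⟨ε, hε, hball⟩ := nhds_basis_closedBall.mem_iff.1
    ((hh.isOpen_image hU).mem_nhds (mem_image_of_mem h hx))
  refine ⟨_, div_sub_mem_discEmbeddings hh (c := -h x) hε (disjoint_left.2 ?_)⟩
  rintro _ ⟨z, hz, rfl⟩ hmem
  obtain ⟨w, hw, hwz⟩ := hball (show -h z ∈ closedBall (h x) ε by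
    rwa [mem_closedBall, ← dist_neg_neg, neg_neg])
  exact hneg z hz w hw (by rw [hwz, neg_neg])

theorem blaschkeFactor_comp_mem_discEmbeddings {a : ℂ} (ha : ‖a‖ < 1) (hf : f ∈ discEmbeddings U) :
    blaschkeFactor a ∘ f ∈ discEmbeddings U :=
  ⟨(isUnivalentOn_blaschkeFactor ha).comp hf.1 hf.2, fun _ hz ↦
    mem_ball_zero_iff.2 (norm_blaschkeFactor_lt_one ha (mem_ball_zero_iff.1 (hf.2 hz)))⟩

/-- Koebe's square root trick: moving an omitted value to `0`, taking a square root and moving the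
image of `z₀` to `0`. Only the square root changes the hyperbolic derivative at `z₀`, and it
increases it. -/
theorem exists_norm_deriv_lt_of_notMem_image (hU : IsOpen U) (hsqrt : HasHolomorphicSqrt U)
    (hf : f ∈ discEmbeddings U) {a z₀ : ℂ} (ha : a ∈ ball 0 1) (haf : a ∉ f '' U) (hz₀ : z₀ ∈ U) :
    ∃ k ∈ discEmbeddings U, ‖deriv f z₀‖ < ‖deriv k z₀‖ := by
  rw [mem_ball_zero_iff] at ha
  have hlt {k : ℂ → ℂ} (hk : k ∈ discEmbeddings U) {z : ℂ} (hz : z ∈ U) : ‖k z‖ < 1 :=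
    mem_ball_zero_iff.1 (hk.2 hz)
  have hdiff {k : ℂ → ℂ} (hk : k ∈ discEmbeddings U) : DifferentiableAt ℂ k z₀ :=
    hk.1.differentiableOn.differentiableAt (hU.mem_nhds hz₀)
  have hg := blaschkeFactor_comp_mem_discEmbeddings ha hf
  have hg0 : ∀ z ∈ U, (blaschkeFactor a ∘ f) z ≠ 0 := fun z hz h0 ↦
    haf ⟨z, hz, (blaschkeFactor_eq_zero_iff (one_sub_conj_mul_ne_zero ha (hlt hf hz))).1 h0⟩
  obtain ⟨h, hhuniv, hsq⟩ := hsqrt.exists_isUnivalentOn_sq_eq hg.1 hg0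
  have hh : h ∈ discEmbeddings U := by
    refine ⟨hhuniv, fun z hz ↦ mem_ball_zero_iff.2 ?_⟩
    rw [← pow_lt_one_iff_of_nonneg (norm_nonneg _) two_ne_zero, ← norm_pow, hsq z hz]
    exact hlt hg hz
  have hk0 : (blaschkeFactor (h z₀) ∘ h) z₀ = 0 :=
    (blaschkeFactor_eq_zero_iff (one_sub_conj_mul_ne_zero (hlt hh hz₀) (hlt hh hz₀))).2 rfl
  refine ⟨_, blaschkeFactor_comp_mem_discEmbeddings (hlt hh hz₀) hh, ?_⟩
  calc ‖deriv f z₀‖ ≤ hyperbolicDeriv f z₀ := norm_deriv_le_hyperbolicDeriv (hlt hf hz₀)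
    _ = hyperbolicDeriv (blaschkeFactor a ∘ f) z₀ :=
      (hyperbolicDeriv_blaschkeFactor_comp ha (hdiff hf) (hlt hf hz₀)).symm
    _ = hyperbolicDeriv (fun z ↦ h z ^ 2) z₀ :=
      hyperbolicDeriv_congr_of_eventuallyEq <| by
        filter_upwards [hU.mem_nhds hz₀] with z hz using (hsq z hz).symm
    _ < hyperbolicDeriv h z₀ :=
      hyperbolicDeriv_sq_lt (hlt hh hz₀) (hh.1.deriv_ne_zero hU hz₀)
    _ = hyperbolicDeriv (blaschkeFactor (h z₀) ∘ h) z₀ :=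
      (hyperbolicDeriv_blaschkeFactor_comp (hlt hh hz₀) (hdiff hh) (hlt hh hz₀)).symm
    _ = ‖deriv (blaschkeFactor (h z₀) ∘ h) z₀‖ := hyperbolicDeriv_eq_norm_deriv hk0

theorem bddAbove_norm_deriv_image_discEmbeddings {z₀ : ℂ} (hU : U ∈ 𝓝 z₀) :
    BddAbove ((fun f ↦ ‖deriv f z₀‖) '' discEmbeddings U) := by
  obtain ⟨r, hr, hrU⟩ := nhds_basis_ball.mem_iff.1 hU
  refine ⟨2 * 1 / r, forall_mem_image.2 fun f hf ↦ ?_⟩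
  exact Complex.norm_deriv_le_div_of_mapsTo_ball (hf.1.differentiableOn.mono hrU)
    (mapsTo_closedBall_apply_of_mapsTo_closedBall
      ((hf.2.mono_right ball_subset_closedBall).mono_left hrU) (mem_ball_self hr)) hr

/-- The limit is an open map, so its image in the closed disc lies in the open disc. -/
theorem mem_discEmbeddings_of_tendstoLocallyUniformlyOn {ι : Type*} {l : Filter ι} [l.NeBot]
    {F : ι → ℂ → ℂ} (hU : IsOpen U) (hconn : IsPreconnected U)
    (hF : ∀ᶠ n in l, F n ∈ discEmbeddings U) (hlim : TendstoLocallyUniformlyOn F g l U)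
    (hg : ∀ c, ¬EqOn g (fun _ ↦ c) U) : g ∈ discEmbeddings U := by
  have hguniv : IsUnivalentOn g U :=
    .of_tendstoLocallyUniformlyOn hU hconn (hF.mono fun _ ↦ And.left) hlim hg
  have hclosed : g '' U ⊆ closedBall 0 1 := image_subset_iff.2 fun z hz ↦
    isClosed_closedBall.mem_of_tendsto (hlim.tendsto_at hz)
      (hF.mono fun _ hn ↦ ball_subset_closedBall (hn.2 hz))
  have hopen : g '' U ⊆ ball 0 1 :=
    interior_closedBall (0 : ℂ) one_ne_zero ▸ interior_maximal hclosed (hguniv.isOpen_image hU)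
  exact ⟨hguniv, mapsTo_iff_image_subset.2 hopen⟩

theorem exists_isMaxOn_norm_deriv_discEmbeddings (hU : IsOpen U) (hconn : IsPreconnected U)
    (hne : (discEmbeddings U).Nonempty) {z₀ : ℂ} (hz₀ : z₀ ∈ U) :
    ∃ f ∈ discEmbeddings U, IsMaxOn (fun f ↦ ‖deriv f z₀‖) (discEmbeddings U) f := by
  have hbdd := bddAbove_norm_deriv_image_discEmbeddings (hU.mem_nhds hz₀)
  obtain ⟨u, -, hu, hmem⟩ := exists_seq_tendsto_sSup (hne.image fun f ↦ ‖deriv f z₀‖) hbdd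
  choose F hF hFu using hmem
  have hFd : ∀ n, DifferentiableOn ℂ (F n) U := fun n ↦ (hF n).1.differentiableOn
  obtain ⟨g, hg⟩ := exists_tendstoLocallyUniformlyOn_of_mapsTo_closedBall (hyperfilter ℕ) hU hFd
    fun n ↦ (hF n).2.mono_right ball_subset_closedBall
  have hsup : ‖deriv g z₀‖ = sSup ((fun f ↦ ‖deriv f z₀‖) '' discEmbeddings U) := by
    refine tendsto_nhds_unique ((hg.deriv (.of_forall hFd) hU).tendsto_at hz₀).norm ?_
    exact (hu.mono_left Nat.hyperfilter_le_atTop).congr fun n ↦ (hFu n).symm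
  have hmax : IsMaxOn (fun f ↦ ‖deriv f z₀‖) (discEmbeddings U) g := fun k hk ↦
    (le_csSup hbdd (mem_image_of_mem _ hk)).trans_eq hsup.symm
  refine ⟨g, mem_discEmbeddings_of_tendstoLocallyUniformlyOn hU hconn (.of_forall hF) hg ?_, hmax⟩
  intro c hc
  have hderiv : deriv g z₀ = 0 :=
    (hc.eventuallyEq_of_mem (hU.mem_nhds hz₀)).deriv_eq.trans (deriv_const z₀ c)
  obtain ⟨k, hk⟩ := hne
  have hle : ‖deriv k z₀‖ ≤ ‖deriv g z₀‖ := hmax hk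
  exact hk.1.deriv_ne_zero hU hz₀ (by simpa [hderiv] using hle)

theorem exists_isUnivalentOn_image_eq_ball (hU : IsOpen U) (hconn : IsConnected U)
    (hproper : U ≠ univ) (hsqrt : HasHolomorphicSqrt U) :
    ∃ f, IsUnivalentOn f U ∧ f '' U = ball 0 1 := by
  obtain ⟨z₀, hz₀⟩ := hconn.nonempty
  obtain ⟨f, hf, hmax⟩ := exists_isMaxOn_norm_deriv_discEmbeddings hU hconn.isPreconnected
    (discEmbeddings_nonempty hU hconn.nonempty hproper hsqrt) hz₀
  refine ⟨f, hf.1, hf.2.image_subset.antisymm fun a ha ↦ ?_⟩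
  by_contra haf
  obtain ⟨k, hk, hlt⟩ := exists_norm_deriv_lt_of_notMem_image hU hsqrt hf ha haf hz₀
  exact hlt.not_ge (hmax hk)

end Extremal

/-- Riemann mapping theorem: every nonempty, simply connected, open proper subset of
the complex plane is biholomorphic to the open unit disk. -/
theorem riemann_mapping_theorem
    (U : Set ℂ) (hopen : IsOpen U) (hne : U.Nonempty) (hproper : U ≠ Set.univ)
    (hsc : SimplyConnectedSpace U) :
    ∃ f g : ℂ → ℂ,
      DifferentiableOn ℂ f U ∧
      DifferentiableOn ℂ g (ball (0 : ℂ) 1) ∧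
      Set.MapsTo f U (ball (0 : ℂ) 1) ∧
      Set.MapsTo g (ball (0 : ℂ) 1) U ∧
      (∀ z ∈ U, g (f z) = z) ∧
      (∀ w ∈ ball (0 : ℂ) 1, f (g w) = w) := by
  have hU : IsSimplyConnected U := hsc
  obtain ⟨f, hf, himage⟩ := exists_isUnivalentOn_image_eq_ball hopen
    hU.isPathConnected.isConnected hproper (hasHolomorphicSqrt_of_isSimplyConnected hU hopen)
  rw [← himage]
  exact ⟨f, invFunOn f U, hf.differentiableOn, hf.differentiableOn_invFunOn hopen,
    mapsTo_image f U, fun _ hw ↦ invFunOn_mem hw, fun _ hz ↦ hf.injOn.leftInvOn_invFunOn hz,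
    fun _ hw ↦ invFunOn_eq hw⟩
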